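/- Let p ∈ (1,∞), C > 0 and k ∈ ℕ. Let (x_n)_{n=1}^k be a finite sequence in a normed space such that for all l ∈ {1,…,k}, all m_1 < ⋯ < m_l in {1,…,k} and all signs ε_1,…,ε_l ∈ {−1,1}, one has ‖Σ_{j=1}^l ε_j x_{m_j}‖ ≤ C·l^{1/p}. Then for every ε ∈ (0, p−1) there exists a constant C̃ depending only on p, C and ε such that ‖Σ_{n=1}^k a_n x_n‖ ≤ C̃·(Σ_{n=1}^k |a_n|^{p−ε})^{1/(p−ε)} for all real scalars a_1,…,a_k. -/

import Mathlib

universe u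

/-- A bundled normed space over `ℝ`. -/
structure NormedSpacePkg : Type (u + 1) where
  carrier : Type u
  [grp : NormedAddCommGroup carrier]
  [mod : NormedSpace ℝ carrier]

attribute [instance] NormedSpacePkg.grp NormedSpacePkg.mod

lemma aux_real (r s t : ℝ) (hr0 : 0 < r) (hr1 : r < 1) (hs : 0 ≤ s) (ht : 0 < t) :
    r * (t - s) * t ^ (r - 1) ≤ t ^ r - s ^ r := by
  have h := Real.geom_mean_le_arith_mean2_weighted hr0.le (by linarith : (0:ℝ) ≤ 1 - r) hs ht.le
    (by ring)
  have hpos : 0 < t ^ (r - 1) := Real.rpow_pos_of_pos ht _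
  have e1 : t ^ (1 - r) * t ^ (r - 1) = 1 := by
    rw [← Real.rpow_add ht]; simp
  have e2 : t * t ^ (r - 1) = t ^ r := by
    nth_rewrite 1 [← Real.rpow_one t]
    rw [← Real.rpow_add ht]; congr 1; ring
  have h2 := mul_le_mul_of_nonneg_right h hpos.le
  rw [mul_assoc, e1, mul_one] at h2
  have : (r * s + (1 - r) * t) * t ^ (r - 1) = t * t ^ (r - 1) - r * (t - s) * t ^ (r - 1) := by
    ring
  rw [this, e2] at h2
  linarith

lemma aux_finset {E : Type*} [NormedAddCommGroup E] [NormedSpace ℝ E] (p C : ℝ) (k : ℕ)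
    (x : Fin k → E)
    (h : ∀ (l : ℕ) (m : Fin l → Fin k), StrictMono m →
        ∀ ε : Fin l → ℝ, (∀ j, ε j = 1 ∨ ε j = -1) →
          ‖∑ j : Fin l, ε j • x (m j)‖ ≤ C * (l : ℝ) ^ (1 / p))
    (σ : Fin k → ℝ) (hσ : ∀ n, σ n = 1 ∨ σ n = -1) (A : Finset (Fin k)) :
    ‖∑ n ∈ A, σ n • x n‖ ≤ C * (A.card : ℝ) ^ (1 / p) := by
  have := h A.card (A.orderEmbOfFin rfl) (A.orderEmbOfFin rfl).strictMono
    (fun j => σ (A.orderEmbOfFin rfl j)) (fun j => hσ _)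
  convert this using 2
  conv_lhs => rw [← Finset.map_orderEmbOfFin_univ A rfl]
  rw [Finset.sum_map]
  rfl

lemma aux_ind {E : Type*} [NormedAddCommGroup E] [NormedSpace ℝ E] (p C q S M : ℝ) (k : ℕ)
    (hq : 0 < q) (hqp : q < p) (hC : 0 < C)
    (x : Fin k → E) (σ : Fin k → ℝ) (b : Fin k → ℝ) (hb : ∀ n, 0 ≤ b n) (hM : ∀ n, b n ≤ M)
    (hS : ∑ n, b n ^ q = S)
    (h : ∀ A : Finset (Fin k), ‖∑ n ∈ A, σ n • x n‖ ≤ C * (A.card : ℝ) ^ (1 / p))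
    (A : Finset (Fin k)) : ∀ s : ℝ, 0 ≤ s → s ≤ M → (∀ n ∈ A, s ≤ b n) →
    ‖∑ n ∈ A, ((b n - s) * σ n) • x n‖ ≤
      C * S ^ (1 / p) / (1 - q / p) * (M ^ (1 - q / p) - s ^ (1 - q / p)) := by
  have hp : 0 < p := hq.trans hqp
  have hr0 : 0 < 1 - q / p := by
    have : q / p < 1 := (div_lt_one hp).2 hqp
    linarith
  have hr1 : 1 - q / p < 1 := by
    have : 0 < q / p := by positivity
    linarith
  have hS0 : 0 ≤ S := by
    rw [← hS]; exact Finset.sum_nonneg fun n _ => Real.rpow_nonneg (hb n) _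
  have hK : 0 ≤ C * S ^ (1 / p) / (1 - q / p) := by positivity
  induction A using Finset.strongInduction with
  | H A ih =>
  intro s hs hsM hsA
  rcases A.eq_empty_or_nonempty with rfl | hne
  · simp only [Finset.sum_empty, norm_zero]
    have := Real.rpow_le_rpow hs hsM hr0.le
    exact mul_nonneg hK (by linarith)
  obtain ⟨n0, hn0, hmin⟩ := A.exists_min_image b hne
  set t := b n0 with ht
  have hst : s ≤ t := hsA n0 hn0
  have key := ih (A.erase n0) (Finset.erase_ssubset hn0) t (hb n0) (hM n0)
    (fun n hn => hmin n (Finset.mem_of_mem_erase hn))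
  have hsum : ∑ n ∈ A, ((b n - s) * σ n) • x n =
      (t - s) • ∑ n ∈ A, σ n • x n + ∑ n ∈ A.erase n0, ((b n - t) * σ n) • x n := by
    have : ∑ n ∈ A.erase n0, ((b n - t) * σ n) • x n = ∑ n ∈ A, ((b n - t) * σ n) • x n := by
      apply Finset.sum_erase
      simp [ht]
    rw [this, Finset.smul_sum, ← Finset.sum_add_distrib]
    refine Finset.sum_congr rfl fun n _ => ?_
    rw [smul_smul, ← add_smul]
    congr 1; ring
  have hstep : (t - s) * (C * (A.card : ℝ) ^ (1 / p)) ≤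
      C * S ^ (1 / p) / (1 - q / p) * (t ^ (1 - q / p) - s ^ (1 - q / p)) := by
    rcases (hb n0).eq_or_lt with h0 | h0
    · have h1 : t = 0 := h0.symm
      have h2 : s = 0 := by linarith
      simp [h1, h2]
    · have hcard : (A.card : ℝ) * t ^ q ≤ S := by
        rw [← hS, ← nsmul_eq_mul]
        calc A.card • t ^ q ≤ ∑ n ∈ A, b n ^ q :=
              Finset.card_nsmul_le_sum _ _ _ fun n hn =>
                Real.rpow_le_rpow h0.le (hmin n hn) hq.le
          _ ≤ _ := Finset.sum_le_sum_of_subset_of_nonneg (Finset.subset_univ _)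
                fun n _ _ => Real.rpow_nonneg (hb n) _
      have h0' : 0 < t := h0
      have h3 := Real.rpow_le_rpow (by positivity) hcard (by positivity : 0 ≤ 1 / p)
      rw [Real.mul_rpow (by positivity) (by positivity), ← Real.rpow_mul h0'.le,
        mul_one_div] at h3
      have h4 : (A.card : ℝ) ^ (1 / p) ≤ S ^ (1 / p) * t ^ ((1 - q / p) - 1) := by
        have e1 : t ^ (q / p) * t ^ ((1 - q / p) - 1) = 1 := by
          rw [← Real.rpow_add h0']; simp
        have := mul_le_mul_of_nonneg_right h3 (Real.rpow_nonneg h0'.le ((1 - q / p) - 1))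
        rwa [mul_assoc, e1, mul_one] at this
      have h5 := aux_real (1 - q / p) s t hr0 hr1 hs h0'
      calc (t - s) * (C * (A.card : ℝ) ^ (1 / p))
          ≤ (t - s) * (C * (S ^ (1 / p) * t ^ ((1 - q / p) - 1))) := by
            have : 0 ≤ t - s := by linarith
            gcongr
        _ = C * S ^ (1 / p) / (1 - q / p) *
              ((1 - q / p) * (t - s) * t ^ ((1 - q / p) - 1)) := by
            generalize t ^ ((1 - q / p) - 1) = y
            generalize 1 - q / p = r at *
            field_simp
        _ ≤ _ := mul_le_mul_of_nonneg_left h5 hK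
  rw [hsum]
  calc _ ≤ ‖(t - s) • ∑ n ∈ A, σ n • x n‖ + _ := norm_add_le _ _
    _ ≤ (t - s) * (C * (A.card : ℝ) ^ (1 / p)) + _ := by
        refine add_le_add ?_ key
        rw [norm_smul, Real.norm_of_nonneg (by linarith)]
        exact mul_le_mul_of_nonneg_left (h A) (by linarith)
    _ ≤ _ := by
        refine (add_le_add_left hstep _).trans (le_of_eq ?_)
        ring

/-- **Lemma 6.8.** Let `1 < p < ∞`, `C > 0` and `ε ∈ (0, p - 1)`. There is a constant `C̃`
(depending only on `p`, `C`, `ε`) such that: whenever `(x_n)_{n=1}^k` is a finite sequence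
in a normed space with `‖∑_{j=1}^l ε_j x_{m_j}‖ ≤ C l^{1/p}` for all `l`, all
`m_1 < ⋯ < m_l` in `{1, …, k}` and all signs `ε_j ∈ {-1, 1}`, one has
`‖∑_n a_n x_n‖ ≤ C̃ (∑_n |a_n|^{p-ε})^{1/(p-ε)}` for all scalars. -/
theorem upper_ellp_estimate_of_alternating_sums
    (p C e : ℝ) (hp : 1 < p) (hC : 0 < C) (he : e ∈ Set.Ioo (0 : ℝ) (p - 1)) :
    ∃ Ct : ℝ, ∀ (W : NormedSpacePkg.{u}) (k : ℕ) (x : Fin k → W.carrier),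
      (∀ (l : ℕ) (m : Fin l → Fin k), StrictMono m →
        ∀ ε : Fin l → ℝ, (∀ j, ε j = 1 ∨ ε j = -1) →
          ‖∑ j : Fin l, ε j • x (m j)‖ ≤ C * (l : ℝ) ^ (1 / p)) →
      ∀ a : Fin k → ℝ,
        ‖∑ n : Fin k, a n • x n‖ ≤ Ct * (∑ n : Fin k, |a n| ^ (p - e)) ^ (1 / (p - e)) := by

  obtain ⟨he0, he1⟩ := he
  have hq : 0 < p - e := by linarith
  have hqp : p - e < p := by linarith
  refine ⟨C / (1 - (p - e) / p), fun W k x h a => ?_⟩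
  generalize hqe : p - e = q at *
  have hp0 : 0 < p := by linarith
  let σ : Fin k → ℝ := fun n => if 0 ≤ a n then 1 else -1
  have hσ : ∀ n, σ n = 1 ∨ σ n = -1 := fun n => by
    by_cases h0 : 0 ≤ a n <;> simp [σ, h0]
  have haσ : ∀ n, |a n| * σ n = a n := fun n => by
    by_cases h0 : 0 ≤ a n
    · simp [σ, h0, abs_of_nonneg h0]
    · simp [σ, h0, abs_of_neg (not_le.1 h0)]
  have hS0 : 0 ≤ ∑ n, |a n| ^ q := Finset.sum_nonneg fun n _ => by positivity
  have hM : ∀ n, |a n| ≤ (∑ n, |a n| ^ q) ^ (1 / q) := fun n => by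
    have h1 : |a n| ^ q ≤ ∑ n, |a n| ^ q :=
      Finset.single_le_sum (f := fun n => |a n| ^ q) (fun n _ => by positivity) (Finset.mem_univ n)
    have h2 := Real.rpow_le_rpow (by positivity) h1 (by positivity : 0 ≤ 1 / q)
    rwa [← Real.rpow_mul (abs_nonneg _), mul_one_div_cancel hq.ne', Real.rpow_one] at h2
  have main := aux_ind p C q _ _ k hq hqp hC x σ (fun n => |a n|) (fun n => abs_nonneg _) hM rfl
    (aux_finset p C k x h σ hσ) Finset.univ 0 le_rfl (by positivity) (fun n _ => abs_nonneg _)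
  simp only [sub_zero, haσ] at main
  refine main.trans (le_of_eq ?_)
  have hr0 : 0 < 1 - q / p := by
    have : q / p < 1 := (div_lt_one hp0).2 hqp
    linarith
  rw [Real.zero_rpow hr0.ne', sub_zero, ← Real.rpow_mul hS0]
  have : (∑ n, |a n| ^ q) ^ (1 / p) * (∑ n, |a n| ^ q) ^ (1 / q * (1 - q / p))
      = (∑ n, |a n| ^ q) ^ (1 / q) := by
    rw [← Real.rpow_add_of_nonneg hS0 (by positivity) (by positivity)]
    congr 1
    field_simp
    ring
  rw [← this]
  ring
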